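/- If a and b are linked by I over M, then M/aM embeds into a finite direct sum of copies of M/IM. -/

import Mathlib

open RingTheory.Sequence

/-- The colon submodule `N :_M a = {m ∈ M | a m ⊆ N}`. -/
def Submodule.colonBy {R M : Type*} [CommRing R] [AddCommGroup M] [Module R M]
    (N : Submodule R M) (a : Ideal R) : Submodule R M :=
  ⨅ r ∈ a, N.comap (LinearMap.lsmul R M r)
/-- `a` and `b` are linked by `I` over `M`: `I ⊆ a ∩ b` is generated by an `M`-regular
sequence, `aM ≠ M ≠ bM`, `IM :_M a = bM` and `IM :_M b = aM`. -/
def Ideal.LinkedBy (R M : Type*) [CommRing R] [AddCommGroup M] [Module R M]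
    (a b I : Ideal R) : Prop :=
  I ≤ a ⊓ b ∧
  (∃ rs : List R, I = Ideal.ofList rs ∧ RingTheory.Sequence.IsRegular M rs) ∧
  a • (⊤ : Submodule R M) ≠ ⊤ ∧ b • (⊤ : Submodule R M) ≠ ⊤ ∧
  (I • ⊤ : Submodule R M).colonBy a = b • (⊤ : Submodule R M) ∧
  (I • ⊤ : Submodule R M).colonBy b = a • (⊤ : Submodule R M)

/-! Multiplication by finitely many generators `g i` of `b` gives a map `m ↦ (g i • m)ᵢ` from `M`
to a finite direct sum of copies of `M ⧸ N`, with kernel `N :_M b`. For linked ideals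
`IM :_M b = aM`, so with `N = IM` this map descends to an embedding of `M ⧸ aM`. -/

section Colon

variable {R M : Type*} [CommRing R] [AddCommGroup M] [Module R M]

theorem mem_colonBy {N : Submodule R M} {b : Ideal R} {m : M} :
    m ∈ N.colonBy b ↔ ∀ r ∈ b, r • m ∈ N := by
  simp [Submodule.colonBy]

theorem mem_colonBy_span {N : Submodule R M} {s : Set R} {m : M} :
    m ∈ N.colonBy (Ideal.span s) ↔ ∀ r ∈ s, r • m ∈ N :=
  mem_colonBy.trans (Submodule.span_le (p := N.comap (LinearMap.toSpanSingleton R M m)))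

theorem ker_pi_smul_mkQ {ι : Type*} (N : Submodule R M) (g : ι → R) :
    LinearMap.ker (LinearMap.pi fun i ↦ g i • N.mkQ) = N.colonBy (Ideal.span (Set.range g)) := by
  ext m
  simp [mem_colonBy_span, LinearMap.ker_pi, ← Submodule.Quotient.mk_smul]

theorem quot_embeds_of_linked_general (N : Submodule R M) {b : Ideal R} (hb : b.FG) :
    ∃ (n : ℕ) (f : (M ⧸ N.colonBy b) →ₗ[R] (Fin n → M ⧸ N)), Function.Injective f := by
  obtain ⟨n, g, rfl⟩ := Submodule.fg_iff_exists_fin_generating_family.1 hb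
  have hker := ker_pi_smul_mkQ N g
  exact ⟨n, Submodule.liftQ _ _ hker.ge,
    LinearMap.ker_eq_bot.1 (Submodule.ker_liftQ_eq_bot _ _ _ hker.le)⟩

end Colon

/-- If `a` and `b` are linked by `I` over `M`, then `M/aM` embeds into a
finite direct sum of copies of `M/IM`. -/
theorem quot_embeds_of_linked {R M : Type*} [CommRing R] [IsNoetherianRing R]
    [AddCommGroup M] [Module R M] [Module.Finite R M]
    (a b I : Ideal R) (h : Ideal.LinkedBy R M a b I) :
    ∃ (n : ℕ) (f : (M ⧸ (a • ⊤ : Submodule R M)) →ₗ[R]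
      (Fin n → M ⧸ (I • ⊤ : Submodule R M))), Function.Injective f := by
  obtain ⟨-, -, -, -, -, colon_b⟩ := h
  exact colon_b ▸ quot_embeds_of_linked_general (I • ⊤) (IsNoetherian.noetherian b)
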